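/- Let n ≥ 1 be an integer. The image of the map Φ: ℝ² → ℝ³, Φ(s,t) = (x_n(s,t), y_n(s,t), s² + t²), is exactly the set {(u,v,w) ∈ ℝ³ : u² + v² = w^n and w ≥ 0}. -/

import Mathlib

/-!
With `z = s + i t`, the map is `Φ(s,t) = (Re zⁿ, Im zⁿ, |z|²)` (`pow_eq_xPoly_yPoly`, the binomial
theorem split by parity of the exponent of `i t`). Multiplicativity of `|·|²` gives
`u² + v² = wⁿ` on the image. Conversely, given `u² + v² = wⁿ` with `w ≥ 0`, any complex `n`-th root
`z` of `u + i v` satisfies `(|z|²)ⁿ = wⁿ`, so `|z|² = w` because `n`-th powers are injective on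
nonnegative reals.
-/

open Real

/-- `x_n(s,t)`. -/
noncomputable def xPoly (n : ℕ) (s t : ℝ) : ℝ :=
  ∑ j ∈ Finset.range (n / 2 + 1), (-1 : ℝ) ^ j * (n.choose (2 * j) : ℝ) * t ^ (2 * j) * s ^ (n - 2 * j)

/-- `y_n(s,t)`. -/
noncomputable def yPoly (n : ℕ) (s t : ℝ) : ℝ :=
  ∑ j ∈ Finset.range ((n + 1) / 2), (-1 : ℝ) ^ j * (n.choose (2 * j + 1) : ℝ) * t ^ (2 * j + 1) * s ^ (n - 2 * j - 1)

/-- The map `Φ(s,t) = (x_n(s,t), y_n(s,t), s² + t²)` from `ℝ²` to `ℝ³`. -/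
noncomputable def Phi (n : ℕ) (p : ℝ × ℝ) : ℝ × ℝ × ℝ :=
  (xPoly n p.1 p.2, yPoly n p.1 p.2, p.1 ^ 2 + p.2 ^ 2)

theorem sum_range_even_odd (f : ℕ → ℂ) (n : ℕ) :
    ∑ k ∈ Finset.range (n + 1), f k =
      ∑ j ∈ Finset.range (n / 2 + 1), f (2 * j) +
        ∑ j ∈ Finset.range ((n + 1) / 2), f (2 * j + 1) := by
  induction n with
  | zero => simp
  | succ n ih =>
    rw [Finset.sum_range_succ, ih]
    rcases Nat.even_or_odd' n with ⟨m, rfl | rfl⟩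
    · rw [show (2 * m + 1 + 1) / 2 = m + 1 by omega, show (2 * m + 1) / 2 = m by omega,
        show 2 * m / 2 = m by omega, Finset.sum_range_succ (fun j => f (2 * j + 1)) m]
      ring
    · rw [show (2 * m + 1 + 1 + 1) / 2 = m + 1 by omega,
        show (2 * m + 1 + 1) / 2 = m + 1 by omega, show (2 * m + 1) / 2 = m by omega,
        Finset.sum_range_succ (fun j => f (2 * j)) (m + 1),
        show 2 * (m + 1) = 2 * m + 1 + 1 by ring]
      ring

theorem pow_eq_xPoly_yPoly (n : ℕ) (s t : ℝ) :
    (⟨s, t⟩ : ℂ) ^ n = ⟨xPoly n s t, yPoly n s t⟩ := by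
  rw [Complex.mk_eq_add_mul_I, Complex.mk_eq_add_mul_I, add_comm (s : ℂ), add_pow,
    sum_range_even_odd, xPoly, yPoly]
  push_cast
  rw [Finset.sum_mul]
  congr 1
  · refine Finset.sum_congr rfl fun j _ => ?_
    rw [mul_pow, pow_mul Complex.I, Complex.I_sq]
    ring
  · refine Finset.sum_congr rfl fun j _ => ?_
    rw [mul_pow, pow_succ Complex.I, pow_mul Complex.I, Complex.I_sq, Nat.sub_sub]
    ring

theorem xPoly_sq_add_yPoly_sq (n : ℕ) (s t : ℝ) :
    xPoly n s t ^ 2 + yPoly n s t ^ 2 = (s ^ 2 + t ^ 2) ^ n := by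
  have h := congrArg Complex.normSq (pow_eq_xPoly_yPoly n s t)
  rw [map_pow, Complex.normSq_mk, Complex.normSq_mk] at h
  simpa only [sq] using h.symm

/-- The image of `Φ` is exactly `{(u,v,w) : u² + v² = w^n, w ≥ 0}`. -/
theorem Phi_range (n : ℕ) (hn : 1 ≤ n) :
    Set.range (Phi n) = {q : ℝ × ℝ × ℝ |
      q.1 ^ 2 + q.2.1 ^ 2 = q.2.2 ^ n ∧ 0 ≤ q.2.2} := by
  ext ⟨u, v, w⟩
  simp only [Set.mem_range, Set.mem_setOf_eq, Phi, Prod.mk.injEq, Prod.exists]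
  constructor
  · rintro ⟨s, t, rfl, rfl, rfl⟩
    exact ⟨xPoly_sq_add_yPoly_sq n s t, by positivity⟩
  · rintro ⟨h, hw⟩
    obtain ⟨⟨s, t⟩, hz⟩ := IsAlgClosed.exists_pow_nat_eq (⟨u, v⟩ : ℂ) (show 0 < n from hn)
    rw [pow_eq_xPoly_yPoly, Complex.mk.injEq] at hz
    obtain ⟨rfl, rfl⟩ := hz
    rw [xPoly_sq_add_yPoly_sq] at h
    exact ⟨s, t, rfl, rfl, (pow_left_inj₀ (by positivity) hw (by omega)).mp h⟩
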